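/- Assume (V; A) satisfies conditions (∗) and (∗∗), and let λ ∈ K. Call a pair (U; C_1, …, C_n), with U a nonzero finite-dimensional K-vector space and C_i ∈ End_K(U), irreducible if the only K-subspaces of U invariant under all C_i are {0} and U. Then (V; A_1, …, A_n) is irreducible if and only if mc_λ(V; A) (equipped with the endomorphisms mc_λ(A)_1, …, mc_λ(A)_n) is irreducible. -/

import Mathlib

/-! Dettweiler–Reiter convolution and middle convolution, in linear-algebra form.
`V^n` is modelled as `Fin n → V`. -/

/-- The Dettweiler–Reiter convolution endomorphism `c_λ(A)_i` of `V^n`, defined by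
`(c_λ(A)_i w)_i = A_1 w_1 + ⋯ + A_n w_n + λ w_i` and `(c_λ(A)_i w)_k = 0` for `k ≠ i`. -/
noncomputable def cDR {K : Type*} [Field K] {V : Type*} [AddCommGroup V] [Module K V]
    {n : ℕ} (lam : K) (A : Fin n → Module.End K V) (i : Fin n) :
    Module.End K (Fin n → V) :=
  (LinearMap.single K (fun _ : Fin n => V) i).comp
    ((∑ j, (A j).comp (LinearMap.proj j)) + lam • LinearMap.proj i)

/-- The subspace `𝔨 = {w ∈ V^n : A_i w_i = 0 for all i}`. -/
def kSub {K : Type*} [Field K] {V : Type*} [AddCommGroup V] [Module K V]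
    {n : ℕ} (A : Fin n → Module.End K V) : Submodule K (Fin n → V) :=
  ⨅ i, LinearMap.ker ((A i).comp (LinearMap.proj i))

/-- The subspace `𝔩 = ⋂_{i=1}^n ker c_λ(A)_i`. -/
noncomputable def lSub {K : Type*} [Field K] {V : Type*} [AddCommGroup V] [Module K V]
    {n : ℕ} (lam : K) (A : Fin n → Module.End K V) : Submodule K (Fin n → V) :=
  ⨅ i, LinearMap.ker (cDR lam A i)

/-- The underlying space `V^n/(𝔨 + 𝔩)` of the middle convolution `mc_λ(V; A)`. -/
noncomputable abbrev mcSpace {K : Type*} [Field K] {V : Type*} [AddCommGroup V] [Module K V]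
    {n : ℕ} (lam : K) (A : Fin n → Module.End K V) :=
  (Fin n → V) ⧸ (kSub A ⊔ lSub lam A)

/-- `e` is the endomorphism `mc_λ(A)_i` of `V^n/(𝔨 + 𝔩)` induced by `c_λ(A)_i`,
characterised by `e ∘ mkQ = mkQ ∘ c_λ(A)_i`. -/
noncomputable def IsInducedEnd {K : Type*} [Field K] {V : Type*} [AddCommGroup V] [Module K V]
    {n : ℕ} (lam : K) (A : Fin n → Module.End K V) (i : Fin n)
    (e : Module.End K (mcSpace lam A)) : Prop :=
  e.comp (kSub A ⊔ lSub lam A).mkQ = (kSub A ⊔ lSub lam A).mkQ.comp (cDR lam A i)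
/-- Condition (∗): for every `i` and `τ ∈ K`,
`ker(A_i − τ·id_V) ∩ ⋂_{j ≠ i} ker A_j = {0}`. -/
def StarKer {K : Type*} [Field K] {V : Type*} [AddCommGroup V] [Module K V]
    {n : ℕ} (A : Fin n → Module.End K V) : Prop :=
  ∀ (i : Fin n) (τ : K),
    LinearMap.ker (A i - τ • (1 : Module.End K V)) ⊓
      (⨅ j, ⨅ _ : j ≠ i, LinearMap.ker (A j)) = ⊥

/-- Condition (∗∗): for every `i` and `τ ∈ K`,
`range(A_i − τ·id_V) + Σ_{j ≠ i} range A_j = V`. -/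
def StarIm {K : Type*} [Field K] {V : Type*} [AddCommGroup V] [Module K V]
    {n : ℕ} (A : Fin n → Module.End K V) : Prop :=
  ∀ (i : Fin n) (τ : K),
    LinearMap.range (A i - τ • (1 : Module.End K V)) ⊔
      (⨆ j, ⨆ _ : j ≠ i, LinearMap.range (A j)) = ⊤
/-- A tuple `(U; C_1, …, C_n)` is irreducible if `U ≠ 0` and the only subspaces of `U`
invariant under all `C_i` are `{0}` and `U`. -/
def IrredTuple {K : Type*} [Field K] {U : Type*} [AddCommGroup U] [Module K U]
    {n : ℕ} (C : Fin n → Module.End K U) : Prop :=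
  Nontrivial U ∧
    ∀ W : Submodule K U, (∀ i, Submodule.map (C i) W ≤ W) → W = ⊥ ∨ W = ⊤

/-! Write `T_i w = A_1 w_1 + ⋯ + A_n w_n + λ w_i`, so that `c_λ(A)_i` is `T_i` followed by the
inclusion of the `i`-th factor. By (∗) the subspace `𝔨 + 𝔩` is the common kernel of the maps
`A_i ∘ T_i`, so that `mc_λ(V; A)` is the image of `V^n` under `w ↦ (A_i (T_i w))_i`.
An `A`-invariant `U ≤ V` gives the `c_λ(A)`-invariant `U^n ≤ V^n`. Conversely, for a
`c_λ(A)`-invariant `W ≤ V^n`, the largest `U` with `U^n ≤ W` is `A`-invariant and contains every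
`A_i (T_i W)`; hence `U = 0` forces `W ≤ 𝔨 + 𝔩`, while `U = V` forces `W = V^n`.
Conditions (∗) and (∗∗) with `τ = -λ` recover `U = 0` from `U^n ≤ 𝔨 + 𝔩`, and `U = V` from
`U^n + 𝔨 + 𝔩 = V^n`. -/

section Core

variable {R ι M : Type*} [Semiring R] [DecidableEq ι] [AddCommMonoid M] [Module R M]

/-- The largest submodule `U` of `M` with `U^ι ≤ W` for finite `ι`, used to pass from subspaces of
`V^n` to subspaces of `V`. It is encoded by the condition that each coordinate inclusion maps `U`
into `W`. -/
def powerCore (W : Submodule R (ι → M)) : Submodule R M :=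
  ⨅ i, W.comap (LinearMap.single R (fun _ : ι => M) i)

lemma mem_powerCore {W : Submodule R (ι → M)} {v : M} :
    v ∈ powerCore W ↔ ∀ i, Pi.single i v ∈ W := by
  simp [powerCore]

lemma pi_univ_le_iff_le_powerCore [Finite ι] {U : Submodule R M} {W : Submodule R (ι → M)} :
    Submodule.pi Set.univ (fun _ => U) ≤ W ↔ U ≤ powerCore W := by
  simp only [← Submodule.iSup_map_single, powerCore, iSup_le_iff, le_iInf_iff,
    Submodule.map_le_iff_le_comap]

lemma powerCore_eq_top_iff [Finite ι] {W : Submodule R (ι → M)} : powerCore W = ⊤ ↔ W = ⊤ := by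
  rw [eq_top_iff, ← pi_univ_le_iff_le_powerCore, Submodule.pi_top, top_le_iff]

end Core

section MiddleConvolution

variable {K : Type*} [Field K] {V : Type*} [AddCommGroup V] [Module K V] {n : ℕ}

lemma irredTuple_quotient_iff {N : Submodule K V} {C : Fin n → Module.End K V}
    {B : Fin n → Module.End K (V ⧸ N)} (hB : ∀ i, (B i).comp N.mkQ = N.mkQ.comp (C i)) :
    IrredTuple B ↔ N ≠ ⊤ ∧
      ∀ W : Submodule K V, (∀ i, W.map (C i) ≤ W) → W ≤ N ∨ N ⊔ W = ⊤ := by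
  rw [IrredTuple, Submodule.Quotient.nontrivial_iff]
  refine and_congr_right fun _ => ⟨fun h W hW => ?_, fun h W hW => ?_⟩
  · have hmap : ∀ i, (W.map N.mkQ).map (B i) ≤ W.map N.mkQ := fun i => by
      rw [← Submodule.map_comp, hB, Submodule.map_comp]
      exact Submodule.map_mono (hW i)
    refine (h _ hmap).imp (fun hbot => ?_) (Submodule.map_mkQ_eq_top N W).1
    rwa [← LinearMap.le_ker_iff_map, Submodule.ker_mkQ] at hbot
  · have hcomap : ∀ i, (W.comap N.mkQ).map (C i) ≤ W.comap N.mkQ := fun i => by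
      rw [Submodule.map_le_iff_le_comap, ← Submodule.comap_comp, ← hB, Submodule.comap_comp]
      exact Submodule.comap_mono (Submodule.map_le_iff_le_comap.1 (hW i))
    have hWmap : (W.comap N.mkQ).map N.mkQ = W :=
      Submodule.map_comap_eq_of_surjective N.mkQ_surjective W
    refine (h _ hcomap).imp (fun hle => ?_) (fun htop => ?_)
    · rw [← hWmap, ← le_bot_iff, ← Submodule.mkQ_map_self N]
      exact Submodule.map_mono hle
    · rw [← hWmap, Submodule.map_mkQ_eq_top, htop]

variable {lam : K} {A : Fin n → Module.End K V}

lemma StarKer.eq_zero (hker : StarKer A) {i : Fin n} {τ : K} {v : V} (hi : A i v = τ • v)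
    (hne : ∀ j ≠ i, A j v = 0) : v = 0 := by
  rw [← Submodule.mem_bot K, ← hker i τ]
  simpa [hi, sub_eq_zero] using hne

lemma StarKer.iInf_ker_eq_bot [NeZero n] (hker : StarKer A) :
    ⨅ i, LinearMap.ker (A i) = ⊥ := by
  refine eq_bot_iff.2 fun v hv => ?_
  have hAv : ∀ i, A i v = 0 := by simpa using hv
  exact hker.eq_zero (i := 0) (τ := 0) (by rw [hAv, zero_smul]) fun j _ => hAv j

lemma StarIm.eq_top (him : StarIm A) {U : Submodule K V} {i : Fin n} {τ : K}
    (hi : ∀ v, A i v - τ • v ∈ U) (hne : ∀ j ≠ i, ∀ v, A j v ∈ U) : U = ⊤ := by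
  rw [eq_top_iff, ← him i τ]
  refine sup_le ?_ (iSup₂_le fun j hj => ?_)
  · rintro _ ⟨v, rfl⟩
    exact hi v
  · rintro _ ⟨v, rfl⟩
    exact hne j hj v

variable (lam A) in
/-- The map `w ↦ A_1 w_1 + ⋯ + A_n w_n + λ w_i`, which is the only nonzero component of
`c_λ(A)_i`. -/
def convComponent (i : Fin n) : (Fin n → V) →ₗ[K] V :=
  (∑ j, (A j).comp (LinearMap.proj j)) + lam • LinearMap.proj i

lemma convComponent_apply (i : Fin n) (w : Fin n → V) :
    convComponent lam A i w = ∑ j, A j (w j) + lam • w i := by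
  simp [convComponent]

lemma cDR_apply (i : Fin n) (w : Fin n → V) :
    cDR lam A i w = Pi.single i (convComponent lam A i w) :=
  rfl

lemma convComponent_single (i j : Fin n) (v : V) :
    convComponent lam A i (Pi.single j v) = A j v + lam • (Pi.single j v : Fin n → V) i := by
  rw [convComponent_apply, Finset.sum_eq_single j (fun k _ hk => by simp [hk]) (by simp),
    Pi.single_eq_same]

lemma convComponent_single_same (i : Fin n) (v : V) :
    convComponent lam A i (Pi.single i v) = A i v + lam • v := by
  rw [convComponent_single, Pi.single_eq_same]

lemma convComponent_single_of_ne {i j : Fin n} (hij : i ≠ j) (v : V) :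
    convComponent lam A i (Pi.single j v) = A j v := by
  rw [convComponent_single, Pi.single_eq_of_ne hij, smul_zero, add_zero]

lemma mem_kSub {w : Fin n → V} : w ∈ kSub A ↔ ∀ i, A i (w i) = 0 := by
  simp [kSub]

lemma mem_lSub {w : Fin n → V} : w ∈ lSub lam A ↔ ∀ i, convComponent lam A i w = 0 := by
  simp [lSub, cDR_apply]

lemma map_convComponent_eq_zero {w : Fin n → V} (hw : w ∈ kSub A ⊔ lSub lam A) (i : Fin n) :
    A i (convComponent lam A i w) = 0 := by
  obtain ⟨x, hx, y, hy, rfl⟩ := Submodule.mem_sup.1 hw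
  rw [mem_kSub] at hx
  rw [map_add, mem_lSub.1 hy i, add_zero, convComponent_apply]
  simp [hx]

lemma mem_kSub_sup_lSub_iff (hA : ⨅ i, LinearMap.ker (A i) = ⊥) {w : Fin n → V} :
    w ∈ kSub A ⊔ lSub lam A ↔ ∀ i, A i (convComponent lam A i w) = 0 := by
  refine ⟨map_convComponent_eq_zero, fun hw => ?_⟩
  rcases eq_or_ne lam 0 with rfl | hlam
  · have hconst : ∀ i j, convComponent 0 A i w = convComponent 0 A j w := fun i j => by
      simp only [convComponent_apply, zero_smul]
    refine Submodule.mem_sup_right (mem_lSub.2 fun i => ?_)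
    rw [← Submodule.mem_bot K, ← hA]
    simpa using fun j => hconst i j ▸ hw j
  · -- `w = x + y` with `x_i = λ⁻¹ T_i w` in `𝔨` and `y` constant, equal to `-λ⁻¹ ∑ A_j w_j`.
    set x : Fin n → V := fun i => lam⁻¹ • convComponent lam A i w with hx
    have hxk : x ∈ kSub A := mem_kSub.2 fun i => by rw [hx, map_smul, hw, smul_zero]
    have hyl : w - x ∈ lSub lam A := mem_lSub.2 fun i => by
      rw [map_sub, convComponent_apply i x, Finset.sum_eq_zero fun j _ => mem_kSub.1 hxk j,
        zero_add, smul_inv_smul₀ hlam, sub_self]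
    exact Submodule.mem_sup.2 ⟨x, hxk, w - x, hyl, add_sub_cancel x w⟩

lemma StarKer.eq_bot_of_pi_le (hker : StarKer A) [NeZero n] {U : Submodule K V}
    (hU : Submodule.pi Set.univ (fun _ => U) ≤ kSub A ⊔ lSub lam A) : U = ⊥ := by
  rw [pi_univ_le_iff_le_powerCore] at hU
  rw [eq_bot_iff, ← hker.iInf_ker_eq_bot]
  intro u hu
  have hsingle : ∀ i j, A i (convComponent lam A i (Pi.single j u)) = 0 := fun i j =>
    map_convComponent_eq_zero (mem_powerCore.1 (hU hu) j) i
  refine (Submodule.mem_iInf _).2 fun j => hker.eq_zero (i := j) (τ := -lam) ?_ fun i hij => ?_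
  · rw [neg_smul, ← map_smul, eq_neg_iff_add_eq_zero, ← map_add, ← convComponent_single_same]
    exact hsingle j j
  · rw [← convComponent_single_of_ne hij]
    exact hsingle i j

lemma StarIm.eq_top_of_map_convComponent_mem (him : StarIm A) [NeZero n] {U : Submodule K V}
    (hU : ∀ i w, A i (convComponent lam A i w) ∈ U) : U = ⊤ := by
  have hrange : ∀ i v, A i v ∈ U := by
    intro i
    suffices hcomap : U.comap (A i) = ⊤ from fun v => hcomap.ge (Submodule.mem_top (x := v))
    refine him.eq_top (i := i) (τ := -lam) (fun v => ?_) fun j hj v => ?_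
    · rw [neg_smul, sub_neg_eq_add, ← convComponent_single_same]
      exact hU i _
    · rw [← convComponent_single_of_ne hj.symm]
      exact hU i _
  exact him.eq_top (i := 0) (τ := 0) (by simpa using hrange 0) fun j _ => hrange j

lemma convComponent_mem {U : Submodule K V} (hU : ∀ i, U.map (A i) ≤ U) {w : Fin n → V}
    (hw : ∀ j, w j ∈ U) (i : Fin n) : convComponent lam A i w ∈ U := by
  rw [convComponent_apply]
  exact U.add_mem (U.sum_mem fun j _ => hU j (Submodule.mem_map_of_mem (hw j)))
    (U.smul_mem lam (hw i))

lemma map_cDR_pi_le {U : Submodule K V} (hU : ∀ i, U.map (A i) ≤ U) (i : Fin n) :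
    (Submodule.pi Set.univ fun _ => U).map (cDR lam A i) ≤ Submodule.pi Set.univ fun _ => U := by
  rintro _ ⟨w, hw, rfl⟩
  rw [cDR_apply]
  exact mem_powerCore.1 (pi_univ_le_iff_le_powerCore.1 le_rfl
    (convComponent_mem hU (fun j => hw j trivial) i)) i

lemma StarIm.eq_top_of_sup_pi_eq_top (him : StarIm A) [NeZero n] {U : Submodule K V}
    (hU : ∀ i, U.map (A i) ≤ U)
    (htop : kSub A ⊔ lSub lam A ⊔ Submodule.pi Set.univ (fun _ => U) = ⊤) : U = ⊤ := by
  refine him.eq_top_of_map_convComponent_mem (lam := lam) fun i w => ?_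
  obtain ⟨x, hx, u, hu, rfl⟩ := Submodule.mem_sup.1 (htop.ge (Submodule.mem_top (x := w)))
  rw [map_add, map_add, map_convComponent_eq_zero hx, zero_add]
  exact hU i (Submodule.mem_map_of_mem (convComponent_mem hU (fun j => hu j trivial) i))

lemma map_mem_powerCore {W : Submodule K (Fin n → V)} (hW : ∀ i, W.map (cDR lam A i) ≤ W)
    {i : Fin n} {v : V} (hv : Pi.single i v ∈ W) : A i v ∈ powerCore W := by
  refine mem_powerCore.2 fun j => ?_
  have hj : Pi.single j (convComponent lam A j (Pi.single i v)) ∈ W :=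
    hW j (Submodule.mem_map_of_mem hv)
  rcases eq_or_ne j i with rfl | hji
  · rw [convComponent_single_same, Pi.single_add, Pi.single_smul] at hj
    exact (W.add_mem_iff_left (W.smul_mem lam hv)).1 hj
  · rwa [convComponent_single_of_ne hji] at hj

lemma map_powerCore_le {W : Submodule K (Fin n → V)} (hW : ∀ i, W.map (cDR lam A i) ≤ W)
    (i : Fin n) : (powerCore W).map (A i) ≤ powerCore W := by
  rintro _ ⟨v, hv, rfl⟩
  exact map_mem_powerCore hW (mem_powerCore.1 hv i)

lemma le_kSub_sup_lSub_of_powerCore_eq_bot (hA : ⨅ i, LinearMap.ker (A i) = ⊥)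
    {W : Submodule K (Fin n → V)} (hW : ∀ i, W.map (cDR lam A i) ≤ W)
    (hbot : powerCore W = ⊥) : W ≤ kSub A ⊔ lSub lam A := by
  refine fun w hw => (mem_kSub_sup_lSub_iff hA).2 fun i => ?_
  have hmem : A i (convComponent lam A i w) ∈ powerCore W :=
    map_mem_powerCore hW (hW i (Submodule.mem_map_of_mem hw))
  rwa [hbot, Submodule.mem_bot] at hmem

lemma StarIm.kSub_sup_lSub_ne_top (him : StarIm A) [NeZero n] [Nontrivial V] :
    kSub A ⊔ lSub lam A ≠ ⊤ := fun htop =>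
  bot_ne_top <| him.eq_top_of_map_convComponent_mem (lam := lam) fun i _ =>
    map_convComponent_eq_zero (htop ▸ Submodule.mem_top) i

lemma IrredTuple.middleConvolution [NeZero n] (hA : IrredTuple A) (hker : StarKer A)
    (him : StarIm A) {B : Fin n → Module.End K (mcSpace lam A)}
    (hB : ∀ i, IsInducedEnd lam A i (B i)) : IrredTuple B := by
  obtain ⟨_, hinv⟩ := hA
  refine (irredTuple_quotient_iff hB).2 ⟨him.kSub_sup_lSub_ne_top, fun W hW => ?_⟩
  refine (hinv (powerCore W) (map_powerCore_le hW)).imp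
    (le_kSub_sup_lSub_of_powerCore_eq_bot hker.iInf_ker_eq_bot hW) fun htop => ?_
  rw [powerCore_eq_top_iff.1 htop, sup_top_eq]

lemma IrredTuple.of_middleConvolution [NeZero n] {B : Fin n → Module.End K (mcSpace lam A)}
    (hirr : IrredTuple B) (hker : StarKer A) (him : StarIm A)
    (hB : ∀ i, IsInducedEnd lam A i (B i)) : IrredTuple A := by
  obtain ⟨hne, hinv⟩ := (irredTuple_quotient_iff hB).1 hirr
  refine ⟨?_, fun U hU => ?_⟩
  · by_contra hV
    rw [not_nontrivial_iff_subsingleton] at hV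
    exact hne (Subsingleton.elim _ _)
  · exact (hinv _ (map_cDR_pi_le hU)).imp hker.eq_bot_of_pi_le (him.eq_top_of_sup_pi_eq_top hU)

end MiddleConvolution

theorem mc_preserves_irreducibility_general
    {K : Type*} [Field K] {V : Type*} [AddCommGroup V] [Module K V]
    {n : ℕ} (hn : 1 ≤ n) (A : Fin n → Module.End K V)
    (hker : StarKer A) (him : StarIm A) (lam : K)
    (B : Fin n → Module.End K (mcSpace lam A))
    (hB : ∀ i, IsInducedEnd lam A i (B i)) :
    IrredTuple A ↔ IrredTuple B := by
  have : NeZero n := NeZero.of_pos hn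
  exact ⟨fun hA => hA.middleConvolution hker him hB,
    fun hirr => hirr.of_middleConvolution hker him hB⟩

/-- Assume `(V; A)` satisfies (∗) and (∗∗), and let `λ ∈ K`.
Then `(V; A)` is irreducible if and only if `mc_λ(V; A)` (with the induced
endomorphisms `mc_λ(A)_i`) is irreducible. -/
theorem mc_preserves_irreducibility
    {K : Type*} [Field K] {V : Type*} [AddCommGroup V] [Module K V] [FiniteDimensional K V]
    {n : ℕ} (hn : 1 ≤ n) (A : Fin n → Module.End K V)
    (hker : StarKer A) (him : StarIm A) (lam : K)
    (B : Fin n → Module.End K (mcSpace lam A))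
    (hB : ∀ i, IsInducedEnd lam A i (B i)) :
    IrredTuple A ↔ IrredTuple B :=
  mc_preserves_irreducibility_general hn A hker him lam B hB
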